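/- arXiv:2605.24507 — 8 statements merged into one kernel-verified Lean document; each statement's English description precedes it below -/
import Mathlib

section
/- Let k be a field of characteristic zero, let ℓ ≥ 4 and n ≥ ℓ, and let [n] = V_1 ⊔ … ⊔ V_{ℓ−2} be any partition into ℓ−2 nonempty parts. Then the Vandermonde-type product F = ∏_{s=1}^{ℓ−2} ∏_{a<b, a,b ∈ V_s} (x_a − x_b) belongs to DI(n,ℓ): for every i ∈ [n] and every 0 ≤ j ≤ n−3, the derivative ∂^j F/∂x_i^j vanishes whenever any ℓ of the variables are identified. -/
open MvPolynomial

/-- `p` vanishes whenever any `ℓ` of the variables are identified: for every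
`ℓ`-subset `L` of the variables, substituting a single common variable
(`X a` for `a ∈ L`) for all variables indexed by `L` gives `0`. -/
def identVanish (k : Type*) [Field k] (n ℓ : ℕ) (p : MvPolynomial (Fin n) k) : Prop :=
  ∀ L : Finset (Fin n), L.card = ℓ → ∀ a ∈ L,
    (aeval (fun i => if i ∈ L then (X a : MvPolynomial (Fin n) k) else X i)) p = 0

/-- Membership in Mubayi's differentiated diagonal ideal `DI(n,ℓ)`:
all derivatives `∂^j p/∂x_i^j` for `i ∈ [n]`, `0 ≤ j ≤ n-3` lie in `I(n,ℓ)`. -/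
def memDI (k : Type*) [Field k] (n ℓ : ℕ) (p : MvPolynomial (Fin n) k) : Prop :=
  ∀ i : Fin n, ∀ j : ℕ, j ≤ n - 3 →
    identVanish k n ℓ ((fun q => pderiv i q)^[j] p)

/-- for `ℓ ≥ 4`, `n ≥ ℓ` and any partition of `[n]` into `ℓ-2`
nonempty parts `V_1, …, V_{ℓ-2}`, the Vandermonde-type product
`F = ∏_s ∏_{a<b ∈ V_s} (x_a - x_b)` lies in `DI(n,ℓ)`. -/
theorem vandermonde_partition_mem_DI (k : Type*) [Field k] [CharZero k] (n ℓ : ℕ)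
    (hℓ : 4 ≤ ℓ) (hn : ℓ ≤ n) (V : Fin (ℓ - 2) → Finset (Fin n))
    (hne : ∀ s, (V s).Nonempty)
    (hdisj : ∀ s t, s ≠ t → Disjoint (V s) (V t))
    (hcover : ∀ x : Fin n, ∃ s, x ∈ V s) :
    memDI k n ℓ
      (∏ s : Fin (ℓ - 2),
        ∏ pr ∈ Finset.univ.filter
            (fun pr : Fin n × Fin n => pr.1 < pr.2 ∧ pr.1 ∈ V s ∧ pr.2 ∈ V s),
          (X pr.1 - X pr.2)) := by
  intro i j _ L hL c hc
  classical
  choose f hf using hcover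
  have hcard : (Finset.univ : Finset (Fin (ℓ - 2))).card < (L.erase i).card := by
    have := Finset.pred_card_le_card_erase (s := L) (a := i)
    simp only [Finset.card_univ, Fintype.card_fin]
    omega
  obtain ⟨x, hx, y, hy, hxy, hfxy⟩ := Finset.exists_ne_map_eq_of_card_lt_of_maps_to hcard
    (f := f) (fun _ _ => Finset.mem_coe.2 (Finset.mem_univ _))
  -- order the pair
  obtain ⟨u, v, hu, hv, huv, hfuv⟩ :
      ∃ u v, u ∈ L.erase i ∧ v ∈ L.erase i ∧ u < v ∧ f u = f v := by
    rcases lt_or_gt_of_ne hxy with h | h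
    · exact ⟨x, y, hx, hy, h, hfxy⟩
    · exact ⟨y, x, hy, hx, h, hfxy.symm⟩
  rw [Finset.mem_erase] at hu hv
  have hdvd : (X u - X v : MvPolynomial (Fin n) k) ∣ (∏ s : Fin (ℓ - 2),
        ∏ pr ∈ Finset.univ.filter
            (fun pr : Fin n × Fin n => pr.1 < pr.2 ∧ pr.1 ∈ V s ∧ pr.2 ∈ V s),
          (X pr.1 - X pr.2)) := by
    refine dvd_trans ?_ (Finset.dvd_prod_of_mem _ (Finset.mem_univ (f u)))
    refine Finset.dvd_prod_of_mem
      (fun pr : Fin n × Fin n => (X pr.1 - X pr.2 : MvPolynomial (Fin n) k)) (a := (u, v)) ?_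
    simp only [Finset.mem_filter, Finset.mem_univ, true_and]
    exact ⟨huv, hf u, hfuv ▸ hf v⟩
  obtain ⟨G, hG⟩ := hdvd
  rw [hG]
  have key : ∀ (j : ℕ) (G : MvPolynomial (Fin n) k),
      (fun q => pderiv i q)^[j] ((X u - X v) * G)
        = (X u - X v) * (fun q => pderiv i q)^[j] G := by
    intro j
    induction j with
    | zero => intro G; rfl
    | succ j ih =>
      intro G
      rw [Function.iterate_succ_apply, Function.iterate_succ_apply, ← ih]
      congr 1
      simp [Derivation.leibniz, pderiv_X_of_ne hu.1, pderiv_X_of_ne hv.1]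
  rw [key, map_mul]
  simp [hu.2, hv.2]
end

section
/- Let r ≥ 0, let a, b be natural numbers with a ≥ b + 2, and let c = (c_1,…,c_m) be a tuple of natural numbers. Then e_r(c_1,…,c_m, a−1, b+1) − e_r(c_1,…,c_m, a, b) = (a − b − 1)·e_{r−2}(c_1,…,c_m), where e_d denotes the elementary symmetric polynomial of degree d evaluated at the given numbers (with the conventions e_0 = 1 and e_d = 0 for d < 0). -/
/-- The elementary symmetric polynomial of degree `d` evaluated at the entries of a
multiset `s` of natural numbers: `e_d(s) = ∑_{T ⊆ s, |T| = d} ∏_{x ∈ T} x`. -/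
def esymmNat (s : Multiset ℕ) (d : ℕ) : ℕ :=
  ((s.powersetCard d).map Multiset.prod).sum

theorem esymmNat_zero (s : Multiset ℕ) : esymmNat s 0 = 1 := by
  simp [esymmNat]

theorem esymmNat_cons (x : ℕ) (s : Multiset ℕ) (d : ℕ) :
    esymmNat (x ::ₘ s) (d + 1) = esymmNat s (d + 1) + x * esymmNat s d := by
  simp [esymmNat, Multiset.powersetCard_cons, Multiset.sum_map_mul_left]

/-- for `a ≥ b + 2` and a tuple `c = (c_1, …, c_m)` of naturals,
`e_r(c, a-1, b+1) - e_r(c, a, b) = (a - b - 1) · e_{r-2}(c)`,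
with the conventions `e_0 = 1` and `e_d = 0` for `d < 0` (so the right-hand factor
is `0` when `r < 2`). -/
theorem esymm_smoothing (m r a b : ℕ) (hab : b + 2 ≤ a) (c : Fin m → ℕ) :
    (esymmNat ((a - 1) ::ₘ (b + 1) ::ₘ Multiset.map c Finset.univ.val) r : ℤ) -
        (esymmNat (a ::ₘ b ::ₘ Multiset.map c Finset.univ.val) r : ℤ) =
      ((a : ℤ) - b - 1) *
        (if 2 ≤ r then (esymmNat (Multiset.map c Finset.univ.val) (r - 2) : ℤ) else 0) := by
  obtain ⟨k, rfl⟩ : ∃ k, a = k + 1 := ⟨a - 1, by omega⟩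
  generalize Multiset.map c Finset.univ.val = s
  rcases r with _ | _ | r
  · simp [esymmNat_zero]
  · simp [esymmNat_cons, esymmNat_zero]
    ring
  · simp [esymmNat_cons]
    ring
end

section
/- Let n, q, r be positive integers and let n_1,…,n_q be nonnegative integers with n_1 + … + n_q = n. Then e_r(n_1,…,n_q) ≤ t_r(n,q), i.e., the elementary symmetric polynomial of degree r is maximized, among q-tuples of nonnegative integers summing to n, by a balanced tuple. -/
/-- The `i`-th balanced part size of a partition of `n` into `q` parts:
`⌊n/q⌋ + 1` for the first `n mod q` parts and `⌊n/q⌋` for the rest. -/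
def balancedPart (n q : ℕ) (i : Fin q) : ℕ :=
  n / q + if (i : ℕ) < n % q then 1 else 0

/-- `t_r(n,q) = ∑_{S ⊆ [q], |S| = r} ∏_{i ∈ S} n_i`, the number of edges of the
complete balanced `q`-partite `r`-graph on `n` vertices. -/
def turanNum (n q r : ℕ) : ℕ :=
  ∑ S ∈ (Finset.univ : Finset (Fin q)).powersetCard r, ∏ i ∈ S, balancedPart n q i

theorem esymm_cons_succ_aux (a k : ℕ) (s : Multiset ℕ) :
    (a ::ₘ s).esymm (k + 1) = s.esymm (k + 1) + a * s.esymm k := by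
  simp only [Multiset.esymm, Multiset.powersetCard_cons, Multiset.map_add, Multiset.sum_add,
    Multiset.map_map, Function.comp_def, Multiset.prod_cons, Multiset.sum_map_mul_left]

theorem esymm_shift_aux (a d k : ℕ) (t : Multiset ℕ) :
    (a ::ₘ (a + d + 2) ::ₘ t).esymm k ≤ ((a + 1) ::ₘ (a + d + 1) ::ₘ t).esymm k := by
  rcases k with _ | _ | k
  · simp [Multiset.esymm]
  · simp only [esymm_cons_succ_aux]
    have h : ∀ s : Multiset ℕ, s.esymm 0 = 1 := by intro s; simp [Multiset.esymm]
    simp only [h]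
    omega
  · simp only [esymm_cons_succ_aux]
    nlinarith [Nat.zero_le (t.esymm k), Nat.zero_le (d * t.esymm k)]

/-- All elements pairwise differ by at most one. -/
def NearAux (s : Multiset ℕ) : Prop := ∀ a ∈ s, ∀ b ∈ s, b ≤ a + 1

theorem near_form_aux (s : Multiset ℕ) (h : NearAux s) (hs : 0 < Multiset.card s) :
    s = Multiset.replicate (Multiset.card s - s.sum % Multiset.card s) (s.sum / Multiset.card s)
      + Multiset.replicate (s.sum % Multiset.card s) (s.sum / Multiset.card s + 1) := by
  obtain ⟨x, hx⟩ := Multiset.card_pos_iff_exists_mem.1 hs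
  obtain ⟨m, hm, hmin⟩ := Finset.exists_min_image s.toFinset id ⟨x, by simpa using hx⟩
  simp only [Multiset.mem_toFinset, id] at hm hmin
  have e : s = Multiset.replicate (s.count m) m + Multiset.replicate (s.count (m+1)) (m+1) := by
    ext y
    simp only [Multiset.count_add, Multiset.count_replicate]
    by_cases hy : y ∈ s
    · have h1 := hmin y hy
      have h2 := h m hm y hy
      obtain rfl | rfl : y = m ∨ y = m + 1 := by omega
      · simp
      · simp
    · have h0 := Multiset.count_eq_zero.2 hy
      split_ifs <;> simp_all
  have hc : 0 < s.count m := Multiset.count_pos.2 hm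
  generalize s.count m = c at *
  generalize s.count (m+1) = j at *
  have hcard : Multiset.card s = c + j := by rw [e]; simp
  have hsum : s.sum = j + (c + j) * m := by rw [e]; simp; ring
  have hd : s.sum / Multiset.card s = m := by
    rw [hcard, hsum, Nat.add_mul_div_left _ _ (by omega), Nat.div_eq_of_lt (by omega)]; simp
  have hmod : s.sum % Multiset.card s = j := by
    rw [hcard, hsum, Nat.add_mul_mod_self_left, Nat.mod_eq_of_lt (by omega)]
  rw [hd, hmod, hcard, Nat.add_sub_cancel]
  exact e

theorem esymm_le_near_aux (r : ℕ) (b : Multiset ℕ) (hb : NearAux b) (hb0 : 0 < Multiset.card b) :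
    ∀ (N : ℕ) (s : Multiset ℕ), (s.map (fun x => x ^ 2)).sum = N →
      Multiset.card s = Multiset.card b → s.sum = b.sum → s.esymm r ≤ b.esymm r := by
  intro N
  induction N using Nat.strong_induction_on with
  | _ N ih =>
    intro s hN hc hsum
    by_cases h : NearAux s
    · have e1 := near_form_aux s h (hc ▸ hb0)
      have e2 := near_form_aux b hb hb0
      rw [hc, hsum, ← e2] at e1
      rw [e1]
    · unfold NearAux at h
      push Not at h
      obtain ⟨x, hx, y, hy, hxy⟩ := h
      obtain ⟨d, rfl⟩ : ∃ d, y = x + d + 2 := ⟨y - x - 2, by omega⟩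
      obtain ⟨u, rfl⟩ := Multiset.exists_cons_of_mem hx
      have hy' : x + d + 2 ∈ u := by
        rcases Multiset.mem_cons.1 hy with h | h
        · omega
        · exact h
      obtain ⟨t, rfl⟩ := Multiset.exists_cons_of_mem hy'
      refine (esymm_shift_aux x d r t).trans (ih _ ?_ _ rfl ?_ ?_)
      · rw [← hN]
        simp only [Multiset.map_cons, Multiset.sum_cons]
        nlinarith
      · simpa using hc
      · rw [← hsum]
        simp only [Multiset.sum_cons]
        omega

/-- among `q`-tuples of nonnegative integers summing to `n`, the
elementary symmetric polynomial of degree `r` is maximized by the balanced tuple: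
`e_r(n_1, …, n_q) ≤ t_r(n,q)`. -/
theorem esymm_le_turanNum (n q r : ℕ) (hn : 0 < n) (hq : 0 < q) (hr : 0 < r)
    (f : Fin q → ℕ) (hsum : ∑ i, f i = n) :
    ∑ S ∈ (Finset.univ : Finset (Fin q)).powersetCard r, ∏ i ∈ S, f i ≤ turanNum n q r := by
  unfold turanNum
  rw [← Finset.esymm_map_val, ← Finset.esymm_map_val]
  refine esymm_le_near_aux r _ ?_ ?_ _ _ rfl ?_ ?_
  · intro a ha b hb
    simp only [Multiset.mem_map] at ha hb
    obtain ⟨i, -, rfl⟩ := ha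
    obtain ⟨j, -, rfl⟩ := hb
    unfold balancedPart
    split_ifs <;> omega
  · simpa using hq
  · simp
  · change ∑ i, f i = ∑ i, balancedPart n q i
    rw [hsum]
    unfold balancedPart
    have hlt := Nat.mod_lt n hq
    rw [Finset.sum_add_distrib, Finset.sum_boole, Fin.card_filter_val_lt, min_eq_right hlt.le]
    simp [Nat.div_add_mod]
end

section
/- Let k be a field, let n, q, r be positive integers, let E be a set of unordered pairs of elements of [n], and let I ⊆ k[x_1,…,x_n] be the ideal generated by {x_i² : i ∈ [n]} ∪ {x_a x_b : {a,b} ∈ E}. Let A = k[x_1,…,x_n]/I and for each d let A_d be the image of the degree-d homogeneous component of k[x_1,…,x_n] under the quotient map. If A_{q+1} = 0, then dim_k A_r ≤ t_r(n,q). -/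
open MvPolynomial

/-- The degree-`d` component of the square-zero quadratic monomial quotient
determined by a set `E` of unordered pairs: the image of the homogeneous degree-`d`
polynomials in the quotient `k[x_1,…,x_n]/(x_i², x_a x_b : {a,b} ∈ E)`. -/
noncomputable def sqZeroComponent (k : Type*) [Field k] (n : ℕ)
    (E : Set (Sym2 (Fin n))) (d : ℕ) :
    Submodule k
      (MvPolynomial (Fin n) k ⧸
        Ideal.span ((Set.range fun i : Fin n => (X i : MvPolynomial (Fin n) k) ^ 2) ∪
          {p | ∃ a b : Fin n, s(a, b) ∈ E ∧ p = X a * X b})) :=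
  Submodule.map
    (Ideal.Quotient.mkₐ k
      (Ideal.span ((Set.range fun i : Fin n => (X i : MvPolynomial (Fin n) k) ^ 2) ∪
        {p | ∃ a b : Fin n, s(a, b) ∈ E ∧ p = X a * X b}))).toLinearMap
    (homogeneousSubmodule (Fin n) k d)

lemma esymm_cons_succ (a : ℕ) (s : Multiset ℕ) (r : ℕ) :
    (a ::ₘ s).esymm (r + 1) = s.esymm (r + 1) + a * s.esymm r := by
  simp [Multiset.esymm, Multiset.powersetCard_cons, Multiset.map_map, Multiset.sum_map_mul_left]

lemma esymm_zero' (s : Multiset ℕ) : s.esymm 0 = 1 := by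
  simp [Multiset.esymm]

lemma esymm_swap (b c : ℕ) (t : Multiset ℕ) (r : ℕ) :
    ((b + 2 + c) ::ₘ b ::ₘ t).esymm r ≤ ((b + 1 + c) ::ₘ (b + 1) ::ₘ t).esymm r := by
  rcases r with _ | _ | r
  · simp [esymm_zero']
  · simp only [esymm_cons_succ, esymm_zero']; omega
  · simp only [esymm_cons_succ]
    nlinarith [Nat.zero_le ((c + 1) * t.esymm r)]

/-- balanced multiset -/
def balMul (n q : ℕ) : Multiset ℕ :=
  (Finset.univ : Finset (Fin q)).val.map (balancedPart n q)

lemma two_valued (m : ℕ) (s : Multiset ℕ) (h : ∀ x ∈ s, x = m ∨ x = m + 1) :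
    ∃ i j, s = Multiset.replicate i m + Multiset.replicate j (m + 1) := by
  induction s using Multiset.induction with
  | empty => exact ⟨0, 0, by simp⟩
  | cons a s ih =>
    obtain ⟨i, j, hij⟩ := ih (fun x hx => h x (Multiset.mem_cons_of_mem hx))
    rcases h a (Multiset.mem_cons_self a s) with rfl | rfl
    · exact ⟨i + 1, j, by rw [hij, Multiset.replicate_succ, Multiset.cons_add]⟩
    · exact ⟨i, j + 1, by rw [hij, Multiset.replicate_succ, Multiset.add_cons]⟩

lemma two_valued_unique (m : ℕ) (s t : Multiset ℕ) (h : ∀ x ∈ s, x = m ∨ x = m + 1)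
    (h' : ∀ x ∈ t, x = m ∨ x = m + 1) (hc : s.card = t.card) (hs : s.sum = t.sum) : s = t := by
  obtain ⟨i, j, rfl⟩ := two_valued m s h
  obtain ⟨i', j', rfl⟩ := two_valued m t h'
  simp at hc hs
  have e1 : (i + j) * m + j = (i' + j') * m + j' := by linarith
  rw [hc] at e1
  have : j = j' := by omega
  have : i = i' := by omega
  subst_vars; rfl

lemma card_balMul (n q : ℕ) : (balMul n q).card = q := by simp [balMul]

lemma sum_balMul (n q : ℕ) (hq : 0 < q) : (balMul n q).sum = n := by
  have hlt := Nat.mod_lt n hq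
  have : (balMul n q).sum = ∑ i : Fin q, balancedPart n q i := rfl
  rw [this]
  simp only [balancedPart]
  rw [Fin.sum_univ_eq_sum_range (fun i => n / q + if i < n % q then 1 else 0) q,
    Finset.sum_add_distrib, Finset.sum_const, Finset.card_range, ← Finset.card_filter]
  have : (Finset.range q).filter (· < n % q) = Finset.range (n % q) := by
    ext x; simp; omega
  rw [this, Finset.card_range, smul_eq_mul, Nat.div_add_mod]

lemma esymm_le_bal (q : ℕ) (hq : 0 < q) (r : ℕ) : ∀ (N : ℕ) (s : Multiset ℕ),
    (s.map (· ^ 2)).sum = N → s.card = q → s.esymm r ≤ (balMul s.sum q).esymm r := by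
  intro N
  induction N using Nat.strong_induction_on with
  | _ N ih =>
  intro s hN hc
  by_cases h : ∃ a ∈ s, ∃ b ∈ s, b + 2 ≤ a
  · obtain ⟨a, ha, b, hb, hab⟩ := h
    obtain ⟨t, rfl⟩ := Multiset.exists_cons_of_mem ha
    have hb' : b ∈ t := by
      rcases Multiset.mem_cons.1 hb with h | h
      · omega
      · exact h
    obtain ⟨u, rfl⟩ := Multiset.exists_cons_of_mem hb'
    obtain ⟨c, rfl⟩ := Nat.exists_eq_add_of_le hab
    have key := ih ((((b + 1 + c) ::ₘ (b + 1) ::ₘ u).map (· ^ 2)).sum) (by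
      rw [← hN]; simp; nlinarith) _ rfl (by simpa using hc)
    refine (esymm_swap b c u r).trans (key.trans (le_of_eq ?_))
    congr 2
    simp; ring
  · push Not at h
    have hne : s.toFinset.Nonempty := by
      rw [Multiset.toFinset_nonempty]; rintro rfl; simp at hc; omega
    obtain ⟨m, hm, hmin⟩ := s.toFinset.exists_min_image id hne
    simp at hm hmin
    have h2 : ∀ x ∈ s, x = m ∨ x = m + 1 := fun x hx => by
      have := h x hx m hm; have := hmin x hx; omega
    have hmq : s.sum / q = m := by
      obtain ⟨i, j, rfl⟩ := two_valued m s h2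
      have hi : 0 < i := by
        rcases Nat.eq_zero_or_pos i with rfl | h
        · simp [Multiset.mem_replicate] at hm
        · exact h
      simp at hc ⊢
      subst hc
      have : i * m + j * (m + 1) = j + (i + j) * m := by ring
      rw [this, Nat.add_mul_div_left _ _ hq, Nat.div_eq_of_lt (by omega), zero_add]
    refine le_of_eq ?_
    congr 1
    refine two_valued_unique m _ _ h2 ?_ (by rw [card_balMul, hc]) (by rw [sum_balMul _ _ hq])
    intro x hx
    simp only [balMul, Multiset.mem_map, balancedPart, hmq] at hx
    obtain ⟨i, -, rfl⟩ := hx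
    split_ifs <;> simp

open Classical in
lemma zykov {V : Type*} (G : SimpleGraph V) : ∀ (q : ℕ) (U : Finset V) (r : ℕ),
    (∀ T ⊆ U, G.IsClique (T : Set V) → T.card ≤ q) →
    ((U.powersetCard r).filter (fun T : Finset V => G.IsClique (T : Set V))).card ≤
      (balMul U.card q).esymm r := by
  intro q
  induction q with
  | zero =>
    intro U r h
    have hU : U = ∅ := by
      by_contra hne
      obtain ⟨v, hv⟩ := Finset.nonempty_iff_ne_empty.2 hne
      have := h {v} (by simpa using hv) (by simp)
      simp at this
    subst hU
    rcases r with _ | r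
    · rw [esymm_zero']; exact (Finset.card_filter_le _ _).trans (by simp)
    · exact (Finset.card_filter_le _ _).trans (by rw [Finset.powersetCard_eq_empty.2 (by simp)]; simp)
  | succ q ih =>
    intro U r h
    rcases r with _ | r
    · rw [esymm_zero']; exact (Finset.card_filter_le _ _).trans (by simp)
    rcases U.eq_empty_or_nonempty with rfl | hne
    · exact (Finset.card_filter_le _ _).trans (by rw [Finset.powersetCard_eq_empty.2 (by simp)]; simp)
    set K : Finset (Finset V) := (U.powersetCard (r + 1)).filter
      (fun T : Finset V => G.IsClique (T : Set V)) with hK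
    obtain ⟨v, hv, hmax⟩ := U.exists_max_image (fun w => (K.filter (fun T => w ∈ T)).card) hne
    set N := U.filter (G.Adj v) with hNdef
    set W := U.filter (fun w => ¬ G.Adj v w) with hWdef
    have hcard : N.card + W.card = U.card := Finset.card_filter_add_card_filter_not _
    have hfree : ∀ T ⊆ N, G.IsClique (T : Set V) → T.card ≤ q := by
      intro T hT hc
      have hvT : v ∉ T := fun hvT => by
        have := hT hvT; simp [hNdef] at this
      have := h (insert v T) (by
        intro x hx
        rcases Finset.mem_insert.1 hx with rfl | hx
        · exact hv
        · exact (Finset.mem_filter.1 (hT hx)).1) (by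
        rw [Finset.coe_insert, SimpleGraph.isClique_insert]
        exact ⟨hc, fun b hb _ => (Finset.mem_filter.1 (hT hb)).2⟩)
      rw [Finset.card_insert_of_notMem hvT] at this
      omega
    have hd : (K.filter (fun T => v ∈ T)).card ≤
        ((N.powersetCard r).filter (fun T : Finset V => G.IsClique (T : Set V))).card := by
      refine Finset.card_le_card_of_injOn (fun T => T.erase v) ?_ ?_
      · intro T hT
        simp only [hK, Finset.coe_filter, Finset.mem_filter, Finset.mem_powersetCard,
          Set.mem_ofPred_eq] at hT ⊢
        obtain ⟨⟨⟨hTU, hTc⟩, hcl⟩, hvT⟩ := hT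
        refine ⟨⟨?_, by rw [Finset.card_erase_of_mem hvT, hTc]; rfl⟩,
          hcl.subset (by simp)⟩
        intro x hx
        obtain ⟨hxv, hxT⟩ := Finset.mem_erase.1 hx
        exact Finset.mem_filter.2 ⟨hTU hxT, hcl hvT hxT hxv.symm⟩
      · intro T hT T' hT' heq
        have h1 : v ∈ T := (Finset.mem_filter.1 hT).2
        have h2 : v ∈ T' := (Finset.mem_filter.1 hT').2
        rw [← Finset.insert_erase h1, ← Finset.insert_erase h2]
        exact congrArg _ heq
    have hcov : K ⊆ ((N.powersetCard (r + 1)).filter (fun T : Finset V => G.IsClique (T : Set V))) ∪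
        W.biUnion (fun w => K.filter (fun T => w ∈ T)) := by
      intro T hT
      have hT' := hT
      simp only [hK, Finset.mem_filter, Finset.mem_powersetCard] at hT'
      by_cases hTN : T ⊆ N
      · exact Finset.mem_union_left _ (by simp [hTN, hT'])
      · obtain ⟨w, hwT, hwN⟩ := Finset.not_subset.1 hTN
        refine Finset.mem_union_right _ (Finset.mem_biUnion.2 ⟨w, ?_, by simp [hT, hwT]⟩)
        have hwU := hT'.1.1 hwT
        exact Finset.mem_filter.2 ⟨hwU, fun ha => hwN (Finset.mem_filter.2 ⟨hwU, ha⟩)⟩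
    have h1 : K.card ≤ (balMul N.card q).esymm (r + 1) + W.card * (balMul N.card q).esymm r := by
      refine (Finset.card_le_card hcov).trans ((Finset.card_union_le _ _).trans ?_)
      refine add_le_add (ih N (r + 1) hfree) ?_
      refine (Finset.card_biUnion_le_card_mul _ _ _ fun w hw =>
        hmax w (Finset.mem_filter.1 hw).1).trans ?_
      exact Nat.mul_le_mul_left _ (hd.trans (ih N r hfree))
    rw [← esymm_cons_succ] at h1
    refine h1.trans ((esymm_le_bal (q + 1) (by omega) (r + 1) _ _ rfl
      (by simp [card_balMul])).trans (le_of_eq ?_))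
    congr 2
    rcases Nat.eq_zero_or_pos q with rfl | hq
    · have hN0 : N.card = 0 := by
        by_contra hne
        obtain ⟨x, hx⟩ := Finset.card_pos.1 (Nat.pos_of_ne_zero hne)
        have := hfree {x} (by simpa using hx) (by simp)
        simp at this
      simp [balMul]; omega
    · rw [Multiset.sum_cons, sum_balMul _ _ hq]; omega

lemma turanNum_eq (n q r : ℕ) : turanNum n q r = (balMul n q).esymm r := by
  rw [turanNum, balMul, Finset.esymm_map_val]

/-- the defining ideal -/
noncomputable abbrev sqIdeal (k : Type*) [Field k] (n : ℕ) (E : Set (Sym2 (Fin n))) :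
    Ideal (MvPolynomial (Fin n) k) :=
  Ideal.span ((Set.range fun i : Fin n => (X i : MvPolynomial (Fin n) k) ^ 2) ∪
          {p | ∃ a b : Fin n, s(a, b) ∈ E ∧ p = X a * X b})

/-- allowed pairs -/
def okGraph (n : ℕ) (E : Set (Sym2 (Fin n))) : SimpleGraph (Fin n) where
  Adj a b := a ≠ b ∧ s(a, b) ∉ E
  symm := ⟨fun a b h => ⟨h.1.symm, by rw [Sym2.eq_swap]; exact h.2⟩⟩
  loopless := ⟨fun _ h => h.1 rfl⟩

lemma prod_notMem (k : Type*) [Field k] (n : ℕ) (E : Set (Sym2 (Fin n))) (T : Finset (Fin n))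
    (hT : (okGraph n E).IsClique (T : Set (Fin n))) :
    (∏ i ∈ T, (X i : MvPolynomial (Fin n) k)) ∉ sqIdeal k n E := by
  classical
  have hI : sqIdeal k n E = Ideal.span ((fun s => monomial s (1 : k)) ''
      {s | ∃ a b : Fin n, (a = b ∨ s(a, b) ∈ E) ∧
        s = Finsupp.single a 1 + Finsupp.single b 1}) := by
    rw [sqIdeal]
    congr 1
    ext p
    simp only [Set.mem_union, Set.mem_range, Set.mem_ofPred_eq, Set.mem_image]
    have hm : ∀ a b : Fin n, monomial (Finsupp.single a 1 + Finsupp.single b 1) (1 : k)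
        = X a * X b := fun a b => by simp [X, monomial_mul]
    constructor
    · rintro (⟨i, rfl⟩ | ⟨a, b, h, rfl⟩)
      · exact ⟨_, ⟨i, i, Or.inl rfl, rfl⟩, by rw [hm, sq]⟩
      · exact ⟨_, ⟨a, b, Or.inr h, rfl⟩, by rw [hm]⟩
    · rintro ⟨s, ⟨a, b, h, rfl⟩, rfl⟩
      rw [hm]
      rcases h with rfl | h
      · exact Or.inl ⟨a, sq _⟩
      · exact Or.inr ⟨a, b, h, rfl⟩
  have hp : (∏ i ∈ T, (X i : MvPolynomial (Fin n) k)) =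
      monomial (∑ i ∈ T, Finsupp.single i 1) 1 := by
    rw [monomial_sum_one]; rfl
  have hval : ∀ a, (∑ i ∈ T, Finsupp.single i 1 : Fin n →₀ ℕ) a = if a ∈ T then 1 else 0 := by
    intro a; simp [Finsupp.finsetSum_apply, Finsupp.single_apply]
  rw [hI, mem_ideal_span_monomial_image, hp]
  intro hcon
  obtain ⟨s, ⟨a, b, hab, rfl⟩, hle⟩ := hcon _ (by
    rw [support_monomial, if_neg one_ne_zero]; exact Finset.mem_singleton_self _)
  have ha := hle a
  have hb := hle b
  rw [hval] at ha hb
  simp only [Finsupp.add_apply, Finsupp.single_eq_same] at ha hb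
  have haT : a ∈ T := by by_contra h; simp [h] at ha
  have hbT : b ∈ T := by by_contra h; simp [h] at hb
  have hne : a ≠ b := by rintro rfl; simp [haT] at ha
  rcases hab with h | h
  · exact hne h
  · exact (hT haT hbT hne).2 h

lemma component_le (k : Type*) [Field k] (n : ℕ) (E : Set (Sym2 (Fin n))) (r : ℕ)
    (F : Finset (Finset (Fin n)))
    (hF : ∀ T : Finset (Fin n), T.card = r → (okGraph n E).IsClique (T : Set (Fin n)) → T ∈ F) :
    sqZeroComponent k n E r ≤ Submodule.span k
      ((fun T : Finset (Fin n) => Ideal.Quotient.mkₐ k (sqIdeal k n E) (∏ i ∈ T, X i)) ''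
        (F : Set (Finset (Fin n)))) := by
  classical
  suffices hmon : ∀ d : Fin n →₀ ℕ, d.degree = r →
      Ideal.Quotient.mkₐ k (sqIdeal k n E) (monomial d 1) ∈ Submodule.span k
      ((fun T : Finset (Fin n) => Ideal.Quotient.mkₐ k (sqIdeal k n E) (∏ i ∈ T, X i)) ''
        (F : Set (Finset (Fin n)))) by
    rintro _ ⟨p, hp, rfl⟩
    change Ideal.Quotient.mkₐ k (sqIdeal k n E) p ∈ _
    have hp' : p.IsHomogeneous r := hp
    rw [p.as_sum, map_sum]
    refine Submodule.sum_mem _ fun d hd => ?_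
    have : monomial d (p.coeff d) = p.coeff d • monomial d (1 : k) := by
      rw [smul_monomial, smul_eq_mul, mul_one]
    rw [this, map_smul]
    refine Submodule.smul_mem _ _ (hmon d ?_)
    have hw := hp' (mem_support_iff.1 hd)
    rw [Finsupp.degree_eq_weight_one]; exact hw
  intro d hd'
  have hdvd : ∀ a b : Fin n, (Finsupp.single a 1 + Finsupp.single b 1 ≤ d) →
      (X a * X b : MvPolynomial (Fin n) k) ∈ sqIdeal k n E →
      Ideal.Quotient.mkₐ k (sqIdeal k n E) (monomial d 1) = 0 := by
    intro a b hle hmem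
    rw [Ideal.Quotient.mkₐ_eq_mk, Ideal.Quotient.eq_zero_iff_mem]
    obtain ⟨e, rfl⟩ := exists_add_of_le hle
    have : (monomial (Finsupp.single a 1 + Finsupp.single b 1 + e) (1 : k))
        = X a * X b * monomial e 1 := by simp [X, monomial_mul]
    rw [this]
    exact Ideal.mul_mem_right _ _ hmem
  by_cases hsq : ∃ a, 2 ≤ d a
  · obtain ⟨a, ha⟩ := hsq
    rw [hdvd a a (by
      intro x; by_cases hx : a = x
      · subst hx; simpa using ha
      · simp [Finsupp.single_apply, hx]) (Ideal.subset_span (Or.inl ⟨a, sq _⟩))]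
    exact Submodule.zero_mem _
  push Not at hsq
  by_cases hcl : (okGraph n E).IsClique (d.support : Set (Fin n))
  · have hone : ∀ i ∈ d.support, d i = 1 := fun i hi => by
      have := hsq i; have := Finsupp.mem_support_iff.1 hi; omega
    refine Submodule.subset_span ⟨d.support, hF _ ?_ hcl, ?_⟩
    · rw [← hd', Finsupp.degree_apply, Finset.sum_congr rfl hone]; simp
    · simp only
      congr 1
      rw [monomial_eq, C_1, one_mul, Finsupp.prod]
      exact Finset.prod_congr rfl fun i hi => by rw [hone i hi, pow_one]
  · rw [SimpleGraph.isClique_iff, Set.Pairwise] at hcl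
    push Not at hcl
    obtain ⟨a, ha, b, hb, hne, hnad⟩ := hcl
    have hE : s(a, b) ∈ E := by
      by_contra h; exact hnad ⟨hne, h⟩
    have ha' := Finsupp.mem_support_iff.1 ha
    have hb' := Finsupp.mem_support_iff.1 hb
    rw [hdvd a b (by
      intro x
      simp only [Finsupp.add_apply, Finsupp.single_apply]
      by_cases h1 : a = x
      · subst h1; simp [hne.symm]; omega
      · by_cases h2 : b = x
        · subst h2; simp [hne]; omega
        · simp [h1, h2]) (Ideal.subset_span (Or.inr ⟨a, b, hE, rfl⟩))]
    exact Submodule.zero_mem _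

lemma mk_mem_component (k : Type*) [Field k] (n : ℕ) (E : Set (Sym2 (Fin n))) (d : ℕ)
    (p : MvPolynomial (Fin n) k) (hp : p.IsHomogeneous d)
    (h : sqZeroComponent k n E d = ⊥) : p ∈ sqIdeal k n E := by
  have h1 : Ideal.Quotient.mkₐ k (sqIdeal k n E) p ∈ sqZeroComponent k n E d :=
    ⟨p, hp, rfl⟩
  rw [h, Submodule.mem_bot] at h1
  exact Ideal.Quotient.eq_zero_iff_mem.1 h1

lemma finrank_le_of_le_span {k M ι : Type*} [Field k] [AddCommGroup M] [Module k M]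
    (S : Submodule k M) (f : ι → M) (F : Finset ι)
    (h : S ≤ Submodule.span k (f '' (F : Set ι))) : Module.finrank k S ≤ F.card := by
  classical
  rw [← Finset.coe_image] at h
  have hfin := FiniteDimensional.span_finset k (F.image f)
  exact (Submodule.finrank_mono h).trans ((finrank_span_finset_le_card _).trans
    Finset.card_image_le)

/-- if `A` is a square-zero quadratic monomial quotient of
`k[x_1,…,x_n]` with `A_{q+1} = 0`, then `dim_k A_r ≤ t_r(n,q)`. -/
theorem hilbert_turan_bound (k : Type*) [Field k] (n q r : ℕ)
    (hn : 0 < n) (hq : 0 < q) (hr : 0 < r) (E : Set (Sym2 (Fin n)))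
    (hvanish : sqZeroComponent k n E (q + 1) = ⊥) :
    Module.finrank k (sqZeroComponent k n E r) ≤ turanNum n q r := by
  classical
  have hfree : ∀ T ⊆ (Finset.univ : Finset (Fin n)),
      (okGraph n E).IsClique (T : Set (Fin n)) → T.card ≤ q := by
    intro T _ hT
    by_contra hlt
    obtain ⟨S, hST, hS⟩ := Finset.exists_subset_card_eq (show q + 1 ≤ T.card by omega)
    refine prod_notMem k n E S (hT.subset (by exact_mod_cast hST)) ?_
    refine mk_mem_component k n E (q + 1) _ ?_ hvanish
    have := IsHomogeneous.prod S (fun i => (X i : MvPolynomial (Fin n) k)) (fun _ => 1)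
      (fun i _ => isHomogeneous_X k i)
    simpa [hS] using this
  have hz := zykov (okGraph n E) q Finset.univ r hfree
  rw [Finset.card_univ, Fintype.card_fin, ← turanNum_eq] at hz
  refine le_trans ?_ hz
  have hF := component_le k n E r
    (((Finset.univ : Finset (Fin n)).powersetCard r).filter
      (fun T : Finset (Fin n) => (okGraph n E).IsClique (T : Set (Fin n))))
    (fun T h1 h2 => Finset.mem_filter.2
      ⟨Finset.mem_powersetCard.2 ⟨Finset.subset_univ _, h1⟩, h2⟩)
  have hfin := finrank_le_of_le_span _ _ _ hF
  exact hfin.trans (le_of_eq (by congr!))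
end

section
/- Let G be a simple graph on vertex set [n] with no clique of size q+1, and let u ≠ v be nonadjacent vertices of G. Let G' be the graph obtained from G by replacing v with a clone of u: the edges of G' not incident to v are exactly those of G, and v is adjacent in G' exactly to the neighbors of u in G (in particular u and v remain nonadjacent). Then G' has no clique of size q+1, and for every r ≥ 1, (number of r-cliques of G') − (number of r-cliques of G) = (number of (r−1)-cliques of G contained in the neighborhood N_G(u)) − (number of (r−1)-cliques of G contained in N_G(v)). In particular, if the first clique count is at least the second, the number of r-cliques does not decrease. -/
theorem ncard_cliques_split {n : ℕ} (H : SimpleGraph (Fin n)) (v : Fin n) (r : ℕ) :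
    {s : Finset (Fin n) | H.IsNClique (r + 1) s}.ncard =
      {s : Finset (Fin n) | H.IsNClique (r + 1) s ∧ v ∉ s}.ncard +
      {s : Finset (Fin n) | H.IsNClique r s ∧ ∀ x ∈ s, H.Adj v x}.ncard := by
  have hinj : Set.InjOn (fun s : Finset (Fin n) => insert v s)
      {s : Finset (Fin n) | H.IsNClique r s ∧ ∀ x ∈ s, H.Adj v x} := by
    rintro s ⟨_, hs⟩ t ⟨_, ht⟩ hst
    have h1 : v ∉ s := fun h => H.loopless.irrefl v (hs v h)
    have h2 : v ∉ t := fun h => H.loopless.irrefl v (ht v h)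
    have h3 := congrArg (fun a => Finset.erase a v) hst
    simpa [Finset.erase_insert h1, Finset.erase_insert h2] using h3
  rw [← Set.ncard_image_of_injOn hinj, ← Set.ncard_union_eq _ (Set.toFinite _) (Set.toFinite _)]
  · congr 1
    ext s
    simp only [Set.mem_setOf_eq, Set.mem_union, Set.mem_image]
    constructor
    · intro hs
      by_cases hv : v ∈ s
      · right
        refine ⟨s.erase v, ⟨⟨?_, ?_⟩, ?_⟩, Finset.insert_erase hv⟩
        · exact hs.isClique.subset (by simpa using Finset.erase_subset v s)
        · rw [Finset.card_erase_of_mem hv, hs.card_eq]; rfl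
        · intro x hx
          rw [Finset.mem_erase] at hx
          exact hs.isClique hv hx.2 hx.1.symm
      · exact Or.inl ⟨hs, hv⟩
    · rintro (h | ⟨t, ⟨ht, hv⟩, rfl⟩)
      · exact h.1
      · exact ht.insert hv
  · rw [Set.disjoint_left]
    rintro s ⟨_, hs⟩ ⟨t, _, rfl⟩
    exact hs (Finset.mem_insert_self v t)

/-- cloning a vertex in a `K_{q+1}`-free graph. Let `G` be a
`K_{q+1}`-free graph on `[n]`, `u ≠ v` nonadjacent, and let `G'` be obtained from
`G` by replacing `v` with a clone of `u` (edges not incident to `v` unchanged, and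
`v` adjacent in `G'` exactly to the `G`-neighbours of `u`). Then `G'` is
`K_{q+1}`-free; for every `r ≥ 1` the clique counts satisfy
`#(r-cliques of G') - #(r-cliques of G)
  = #((r-1)-cliques of G in N_G(u)) - #((r-1)-cliques of G in N_G(v))`
(stated additively); and in particular if the count in `N_G(u)` is at least that
in `N_G(v)` then the number of `r`-cliques does not decrease. -/
theorem clone_cliqueFree_and_count (n q : ℕ) (G G' : SimpleGraph (Fin n))
    (hfree : G.CliqueFree (q + 1)) (u v : Fin n) (huv : u ≠ v) (hnadj : ¬G.Adj u v)
    (hG' : ∀ x y : Fin n, G'.Adj x y ↔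
      ((x ≠ v ∧ y ≠ v ∧ G.Adj x y) ∨ (x = v ∧ G.Adj u y) ∨ (y = v ∧ G.Adj u x))) :
    G'.CliqueFree (q + 1) ∧
      ∀ r : ℕ, 1 ≤ r →
        ({s : Finset (Fin n) | G'.IsNClique r s}.ncard +
            {s : Finset (Fin n) | G.IsNClique (r - 1) s ∧ ∀ x ∈ s, G.Adj v x}.ncard =
          {s : Finset (Fin n) | G.IsNClique r s}.ncard +
            {s : Finset (Fin n) | G.IsNClique (r - 1) s ∧ ∀ x ∈ s, G.Adj u x}.ncard) ∧
        ({s : Finset (Fin n) | G.IsNClique (r - 1) s ∧ ∀ x ∈ s, G.Adj v x}.ncard ≤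
            {s : Finset (Fin n) | G.IsNClique (r - 1) s ∧ ∀ x ∈ s, G.Adj u x}.ncard →
          {s : Finset (Fin n) | G.IsNClique r s}.ncard ≤
            {s : Finset (Fin n) | G'.IsNClique r s}.ncard) := by
  have hoff : ∀ x y, x ≠ v → y ≠ v → (G'.Adj x y ↔ G.Adj x y) := by
    intro x y hx hy
    simp [hG', hx, hy]
  have hv : ∀ y, G'.Adj v y ↔ G.Adj u y := by
    intro y
    rw [hG']
    constructor
    · rintro (h | h | h)
      · exact absurd rfl h.1
      · exact h.2
      · exact absurd h.2 hnadj
    · intro h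
      exact Or.inr (Or.inl ⟨rfl, h⟩)
  have hcl : ∀ (s : Finset (Fin n)) (k : ℕ), v ∉ s → (G'.IsNClique k s ↔ G.IsNClique k s) := by
    intro s k hs
    rw [SimpleGraph.isNClique_iff, SimpleGraph.isNClique_iff]
    refine and_congr_left fun _ => ?_
    have hne : ∀ x ∈ s, x ≠ v := fun x hx h => hs (h ▸ hx)
    constructor
    · intro h x hx y hy hxy
      exact (hoff x y (hne x hx) (hne y hy)).1 (h hx hy hxy)
    · intro h x hx y hy hxy
      exact (hoff x y (hne x hx) (hne y hy)).2 (h hx hy hxy)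
  have hrep : G' = G.replaceVertex u v := by
    ext x y
    by_cases hx : x = v
    · subst hx
      rw [hv]
      by_cases hy : y = x
      · subst hy
        simp [hnadj]
      · rw [G.adj_replaceVertex_iff_of_ne_right _ hy]
    · by_cases hy : y = v
      · subst hy
        rw [SimpleGraph.adj_comm, hv, SimpleGraph.adj_comm (G.replaceVertex u y),
          G.adj_replaceVertex_iff_of_ne_right _ hx]
      · rw [hoff x y hx hy, G.adj_replaceVertex_iff_of_ne _ hx hy]
  refine ⟨hrep ▸ hfree.replaceVertex u v, ?_⟩
  intro r hr
  obtain ⟨k, rfl⟩ : ∃ k, r = k + 1 := ⟨r - 1, by omega⟩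
  simp only [Nat.add_sub_cancel]
  have e1 := ncard_cliques_split G v k
  have e2 := ncard_cliques_split G' v k
  have e3 : {s : Finset (Fin n) | G'.IsNClique (k + 1) s ∧ v ∉ s} =
      {s : Finset (Fin n) | G.IsNClique (k + 1) s ∧ v ∉ s} := by
    ext s
    exact and_congr_left fun h => hcl s _ h
  have e4 : {s : Finset (Fin n) | G'.IsNClique k s ∧ ∀ x ∈ s, G'.Adj v x} =
      {s : Finset (Fin n) | G.IsNClique k s ∧ ∀ x ∈ s, G.Adj u x} := by
    ext s
    simp only [hv, Set.mem_setOf_eq]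
    exact and_congr_left fun h => hcl s _ fun hvs => hnadj (h v hvs)
  rw [e3, e4] at e2
  omega
end

section
/- Let n, ℓ, r ≥ 2 and let R = k[y_E : E ∈ C([n],r)] be the polynomial ring over a field k with one variable per r-subset of [n]. Then the cover ideal of Mubayi's family equals the missing codegree-star ideal: ⋂_H (y_E : E ∈ H), the intersection over all copies H ⊆ C([n],r) of members of K_ℓ^{(r)}, equals J^{(r)}_{n,ℓ} := ⋂_{L ∈ C([n],ℓ)} ( u^{(r)}_{ab} : {a,b} ⊆ L ), where u^{(r)}_{ab} = ∏_{E ∈ C([n],r), {a,b} ⊆ E} y_E. -/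
open MvPolynomial

/-- `H` is a copy of the hypergraph `H₀` inside the `r`-subsets of `[n]`: the image
of the edge set of `H₀` under a map injective on the vertex set of `H₀`. -/
def IsHypCopy {n : ℕ} (H₀ : Finset (Finset ℕ)) (H : Finset (Finset (Fin n))) : Prop :=
  ∃ f : ℕ → Fin n, Set.InjOn f ↑(H₀.sup id) ∧ H = H₀.image (Finset.image f)

/-- `H₀` is a member of Mubayi's family `K_ℓ^{(r)}`: an `r`-uniform hypergraph with
at most `C(ℓ,2)` edges containing a core `S` of `ℓ` vertices every pair of which
lies in an edge. -/
def MubayiMember (ℓ r : ℕ) (H₀ : Finset (Finset ℕ)) : Prop :=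
  (∀ e ∈ H₀, e.card = r) ∧ H₀.card ≤ Nat.choose ℓ 2 ∧
    ∃ S : Finset ℕ, S.card = ℓ ∧
      ∀ a ∈ S, ∀ b ∈ S, a ≠ b → ∃ e ∈ H₀, a ∈ e ∧ b ∈ e

/-- The missing codegree-star monomial `u^{(r)}_{ab} = ∏_{E ⊇ {a,b}} y_E` in the
edge-variable ring `k[y_E : E ∈ C([n],r)]`. -/
noncomputable def starMonomial (k : Type*) [Field k] (n r : ℕ) (a b : Fin n) :
    MvPolynomial {E : Finset (Fin n) // E.card = r} k :=
  ∏ e ∈ Finset.univ.filter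
      (fun e : {E : Finset (Fin n) // E.card = r} => a ∈ e.val ∧ b ∈ e.val),
    X e

/-- The missing codegree-star ideal
`J^{(r)}_{n,ℓ} = ⋂_{L ∈ C([n],ℓ)} (u^{(r)}_{ab} : {a,b} ⊆ L)`. -/
noncomputable def codegreeStarIdeal (k : Type*) [Field k] (n ℓ r : ℕ) :
    Ideal (MvPolynomial {E : Finset (Fin n) // E.card = r} k) :=
  ⨅ (L : Finset (Fin n)) (_ : L.card = ℓ),
    Ideal.span {p | ∃ a ∈ L, ∃ b ∈ L, a ≠ b ∧ p = starMonomial k n r a b}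

/-- Relabelling `H` along `Fin n → ℕ` gives a hypergraph of which `H` is a copy. -/
lemma exists_copy_of_cover {n ℓ r : ℕ} (hn : 2 ≤ n) (H : Finset (Finset (Fin n)))
    (L : Finset (Fin n)) (hL : L.card = ℓ) (hr : ∀ e ∈ H, e.card = r)
    (hc : H.card ≤ Nat.choose ℓ 2)
    (hcov : ∀ a ∈ L, ∀ b ∈ L, a ≠ b → ∃ e ∈ H, a ∈ e ∧ b ∈ e) :
    ∃ H₀ : Finset (Finset ℕ), MubayiMember ℓ r H₀ ∧ IsHypCopy H₀ H := by
  classical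
  refine ⟨H.image (Finset.image Fin.val), ⟨?_, ?_, L.image Fin.val, ?_, ?_⟩, ?_⟩
  · intro e he
    obtain ⟨e', he', rfl⟩ := Finset.mem_image.1 he
    rw [Finset.card_image_of_injective _ Fin.val_injective]
    exact hr _ he'
  · exact Finset.card_image_le.trans hc
  · rw [Finset.card_image_of_injective _ Fin.val_injective, hL]
  · intro a ha b hb hab
    obtain ⟨a, ha', rfl⟩ := Finset.mem_image.1 ha
    obtain ⟨b, hb', rfl⟩ := Finset.mem_image.1 hb
    obtain ⟨e, he, h1, h2⟩ := hcov a ha' b hb' (fun h => hab (by rw [h]))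
    exact ⟨_, Finset.mem_image_of_mem _ he, Finset.mem_image_of_mem _ h1,
      Finset.mem_image_of_mem _ h2⟩
  · let f : ℕ → Fin n := fun x => if h : x < n then ⟨x, h⟩ else ⟨0, by omega⟩
    have hf : ∀ x : Fin n, f x.val = x := fun x => by simp [f]
    refine ⟨f, ?_, ?_⟩
    · have key : ∀ x ∈ (H.image (Finset.image Fin.val)).sup id, ∃ y : Fin n, y.val = x := by
        intro x hx
        obtain ⟨e, he, hxe⟩ := Finset.mem_sup.1 hx
        obtain ⟨e', he', rfl⟩ := Finset.mem_image.1 he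
        obtain ⟨y, _, hy⟩ := Finset.mem_image.1 hxe
        exact ⟨y, hy⟩
      intro x hx y hy hxy
      obtain ⟨x, rfl⟩ := key x hx
      obtain ⟨y, rfl⟩ := key y hy
      rw [hf, hf] at hxy
      rw [hxy]
    · have h1 : f ∘ Fin.val = id := funext hf
      have h2 : Finset.image f ∘ Finset.image (Fin.val : Fin n → ℕ) = id := by
        funext s
        simp [Finset.image_image, h1]
      rw [Finset.image_image, h2, Finset.image_id]

lemma starMonomial_eq (k : Type*) [Field k] (n r : ℕ) (a b : Fin n) :
    starMonomial k n r a b = monomial (∑ e ∈ Finset.univ.filter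
      (fun e : {E : Finset (Fin n) // E.card = r} => a ∈ e.val ∧ b ∈ e.val),
        Finsupp.single e 1) 1 := by
  rw [starMonomial, monomial_sum_one]
  rfl

/-- the cover ideal of Mubayi's family `K_ℓ^{(r)}` — the intersection
over all copies `H` of members of `K_ℓ^{(r)}` of the ideals `(y_E : E ∈ H)` —
equals the missing codegree-star ideal `J^{(r)}_{n,ℓ}`. -/
theorem mubayi_coverIdeal_eq_codegreeStarIdeal (k : Type*) [Field k] (n ℓ r : ℕ)
    (hn : 2 ≤ n) (hℓ : 2 ≤ ℓ) (hr : 2 ≤ r) :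
    (⨅ (H : Finset (Finset (Fin n)))
        (_ : ∃ H₀ : Finset (Finset ℕ), MubayiMember ℓ r H₀ ∧ IsHypCopy H₀ H),
      Ideal.span {p | ∃ e : {E : Finset (Fin n) // E.card = r}, ↑e ∈ H ∧ p = X e}) =
    codegreeStarIdeal k n ℓ r := by
  classical
  apply le_antisymm
  · unfold codegreeStarIdeal
    refine le_iInf₂ fun L hL p hp => ?_
    let m : Fin n × Fin n → ({E : Finset (Fin n) // E.card = r} →₀ ℕ) := fun q =>
      ∑ e ∈ Finset.univ.filter
        (fun e : {E : Finset (Fin n) // E.card = r} => q.1 ∈ e.val ∧ q.2 ∈ e.val),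
        Finsupp.single e 1
    have hset : {p | ∃ a ∈ L, ∃ b ∈ L, a ≠ b ∧ p = starMonomial k n r a b} =
        (fun s => monomial s (1 : k)) '' (m '' {q | q.1 ∈ L ∧ q.2 ∈ L ∧ q.1 ≠ q.2}) := by
      ext p
      constructor
      · rintro ⟨a, ha, b, hb, hab, rfl⟩
        exact ⟨_, ⟨(a, b), ⟨ha, hb, hab⟩, rfl⟩, (starMonomial_eq k n r a b).symm⟩
      · rintro ⟨_, ⟨⟨a, b⟩, ⟨ha, hb, hab⟩, rfl⟩, rfl⟩
        exact ⟨a, ha, b, hb, hab, (starMonomial_eq k n r a b).symm⟩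
    rw [hset, mem_ideal_span_monomial_image]
    intro xi hxi
    by_contra hcon
    have hex : ∀ T ∈ L.powersetCard 2, ∃ e : {E : Finset (Fin n) // E.card = r},
        T ⊆ e.val ∧ xi e = 0 := by
      intro T hT
      obtain ⟨hTL, hT2⟩ := Finset.mem_powersetCard.1 hT
      obtain ⟨a, b, hab, rfl⟩ := Finset.card_eq_two.1 hT2
      by_contra hno
      push Not at hno
      refine hcon ⟨m (a, b), ⟨(a, b), ⟨hTL (by simp), hTL (by simp), hab⟩, rfl⟩, ?_⟩
      intro e
      simp only [m, Finsupp.finsetSum_apply, Finsupp.single_apply, Finset.sum_ite_eq',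
        Finset.mem_filter, Finset.mem_univ, true_and]
      split_ifs with h
      · exact Nat.one_le_iff_ne_zero.2 (hno e (by
          intro x hx
          simp only [Finset.mem_insert, Finset.mem_singleton] at hx
          rcases hx with rfl | rfl
          exacts [h.1, h.2]))
      · exact Nat.zero_le _
    choose g hg1 hg2 using hex
    let H : Finset (Finset (Fin n)) := (L.powersetCard 2).attach.image fun T => (g T.1 T.2).val
    have hH := exists_copy_of_cover (ℓ := ℓ) (r := r) hn H L hL
      (by
        intro e he
        obtain ⟨T, _, rfl⟩ := Finset.mem_image.1 he
        exact (g T.1 T.2).2)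
      (by
        refine Finset.card_image_le.trans ?_
        rw [Finset.card_attach, Finset.card_powersetCard, hL])
      (by
        intro a ha b hb hab
        have hT : ({a, b} : Finset (Fin n)) ∈ L.powersetCard 2 := by
          rw [Finset.mem_powersetCard]
          refine ⟨?_, Finset.card_pair hab⟩
          intro x hx
          simp only [Finset.mem_insert, Finset.mem_singleton] at hx
          rcases hx with rfl | rfl <;> assumption
        refine ⟨_, Finset.mem_image_of_mem _ (Finset.mem_attach _ ⟨_, hT⟩), ?_, ?_⟩
        · exact hg1 _ hT (by simp)
        · exact hg1 _ hT (by simp))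
    have hp' := (Submodule.mem_iInf _).1 ((Submodule.mem_iInf _).1 hp H) hH
    have hset2 : {p : MvPolynomial {E : Finset (Fin n) // E.card = r} k |
        ∃ e : {E : Finset (Fin n) // E.card = r}, ↑e ∈ H ∧ p = X e} =
        X '' {e : {E : Finset (Fin n) // E.card = r} | e.val ∈ H} := by
      ext p
      constructor
      · rintro ⟨e, he, rfl⟩
        exact ⟨e, he, rfl⟩
      · rintro ⟨e, he, rfl⟩
        exact ⟨e, he, rfl⟩
    rw [hset2, mem_ideal_span_X_image] at hp'
    obtain ⟨e, he, hne⟩ := hp' xi hxi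
    obtain ⟨T, _, hTe⟩ := Finset.mem_image.1 he
    have : g T.1 T.2 = e := Subtype.ext hTe
    exact hne (this ▸ hg2 T.1 T.2)
  · refine le_iInf₂ fun H hH => ?_
    obtain ⟨H₀, ⟨hr0, _, S, hS, hcov⟩, f, hf, rfl⟩ := hH
    have hsub : ∀ e ∈ H₀, ∀ x ∈ e, x ∈ H₀.sup id := fun e he x hx =>
      Finset.mem_sup.2 ⟨e, he, hx⟩
    have hSsub : ∀ x ∈ S, x ∈ H₀.sup id := by
      intro x hx
      obtain ⟨y, hy, hyx⟩ := Finset.exists_mem_ne (by omega : 1 < S.card) x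
      obtain ⟨e, he, h1, _⟩ := hcov x hx y hy hyx.symm
      exact hsub e he x h1
    have hL : (S.image f).card = ℓ := by
      rw [Finset.card_image_of_injOn (hf.mono hSsub), hS]
    refine (iInf₂_le (S.image f) hL).trans (Ideal.span_le.2 ?_)
    rintro _ ⟨a, ha, b, hb, hab, rfl⟩
    obtain ⟨a, ha', rfl⟩ := Finset.mem_image.1 ha
    obtain ⟨b, hb', rfl⟩ := Finset.mem_image.1 hb
    obtain ⟨e, he, h1, h2⟩ := hcov a ha' b hb' (fun h => hab (by rw [h]))
    have hcard : (e.image f).card = r := by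
      rw [Finset.card_image_of_injOn (hf.mono (hsub e he)), hr0 e he]
    refine Ideal.mem_of_dvd _ (Finset.dvd_prod_of_mem _ (a := ⟨e.image f, hcard⟩) ?_)
      (Ideal.subset_span ⟨⟨e.image f, hcard⟩, Finset.mem_image_of_mem _ he, rfl⟩)
    simp only [Finset.mem_filter, Finset.mem_univ, true_and]
    exact ⟨Finset.mem_image_of_mem _ h1, Finset.mem_image_of_mem _ h2⟩
end

section
/- Let n, ℓ, r ≥ 2. Then ex(n, K_ℓ^{(r)}) = t_r(n, ℓ−1): the maximum number of edges of an r-uniform hypergraph on n vertices containing no member of Mubayi's family K_ℓ^{(r)} equals the number of edges of the complete balanced (ℓ−1)-partite r-graph on n vertices. -/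
open MvPolynomial

open Finset in
lemma choose_le_supersets (q r : ℕ) (T : Finset (Fin q)) (hT : T.card ≤ r) :
    (q - T.card).choose (r - T.card) ≤
      (((univ : Finset (Fin q)).powersetCard r).filter (fun S => T ⊆ S)).card := by
  have h : (q - T.card).choose (r - T.card) = ((univ \ T).powersetCard (r - T.card)).card := by
    rw [card_powersetCard, card_sdiff_of_subset (subset_univ _)]; simp
  rw [h]
  apply card_le_card_of_injOn (fun W => W ∪ T)
  · intro W hW
    simp only [mem_coe, mem_powersetCard] at hW
    have hd : Disjoint W T := by
      rw [disjoint_left]; intro x hx; have := hW.1 hx; simpa using this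
    simp only [coe_filter, mem_powersetCard, Set.mem_ofPred_eq]
    refine ⟨⟨subset_univ _, ?_⟩, subset_union_right⟩
    rw [card_union_of_disjoint hd]; omega
  · intro W hW W' hW' he
    simp only [mem_coe, mem_powersetCard] at hW hW'
    have h1 := hW.1
    have h2 := hW'.1
    ext x
    have h3 := Finset.ext_iff.1 he x
    have h4 := @h1 x
    have h5 := @h2 x
    simp at h3 h4 h5
    tauto

lemma balancedPart_step (n q : ℕ) (hq : 0 < q) (hn : q ≤ n) (i : Fin q) :
    balancedPart n q i = balancedPart (n - q) q i + 1 := by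
  obtain ⟨m, rfl⟩ := Nat.exists_eq_add_of_le hn
  unfold balancedPart
  simp only [Nat.add_sub_cancel_left, Nat.add_mod_left, Nat.add_div_left _ hq]
  omega

open Finset in
lemma turanNum_step (n q r : ℕ) (hq : 0 < q) (hn : q ≤ n) :
    ∑ s ∈ range (r + 1), turanNum (n - q) q s * (q - s).choose (r - s) ≤ turanNum n q r := by
  have hR : turanNum n q r = ∑ T ∈ (univ : Finset (Fin q)).powerset,
      ∑ S ∈ ((univ : Finset (Fin q)).powersetCard r).filter (fun S => T ⊆ S),
        ∏ i ∈ T, balancedPart (n - q) q i := by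
    unfold turanNum
    simp_rw [balancedPart_step n q hq hn, prod_add_one]
    apply sum_comm'
    intro S T
    simp
  rw [hR]
  have hL : ∑ s ∈ range (r + 1), turanNum (n - q) q s * (q - s).choose (r - s) =
      ∑ T ∈ (univ : Finset (Fin q)).powerset.filter (fun T => T.card ∈ range (r + 1)),
        (∏ i ∈ T, balancedPart (n - q) q i) * (q - T.card).choose (r - T.card) := by
    rw [← sum_fiberwise_of_maps_to (g := Finset.card) (t := range (r + 1))]
    · apply sum_congr rfl
      intro s hs
      unfold turanNum
      rw [sum_mul, powersetCard_eq_filter, filter_filter]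
      apply sum_congr
      · ext T; simp at hs ⊢; omega
      · intro T hT
        simp only [mem_filter] at hT
        rw [hT.2.2]
    · intro T hT
      exact (mem_filter.1 hT).2
  rw [hL]
  refine le_trans ?_ (sum_le_sum_of_subset (filter_subset (fun T => T.card ∈ range (r + 1)) _))
  apply sum_le_sum
  intro T hT
  have hT' : T.card ≤ r := by simpa [Nat.lt_succ_iff] using hT
  rw [sum_const, smul_eq_mul, mul_comm]
  exact Nat.mul_le_mul_right _ (choose_le_supersets q r T hT')

open Finset in
lemma turanNum_small (n q r : ℕ) (hn : n < q) : n.choose r ≤ turanNum n q r := by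
  have h : n.choose r =
      (((univ : Finset (Fin q)).filter (fun i : Fin q => (i : ℕ) < n)).powersetCard r).card := by
    rw [card_powersetCard, Fin.card_filter_val_lt]; congr 1; omega
  rw [h, card_eq_sum_ones]
  unfold turanNum
  refine le_trans (sum_le_sum ?_) (sum_le_sum_of_subset (powersetCard_mono (subset_univ _)))
  intro S hS
  rw [mem_powersetCard] at hS
  rw [prod_eq_one]
  intro i hi
  have := hS.1 hi
  simp at this
  simp [balancedPart, Nat.div_eq_of_lt hn, Nat.mod_eq_of_lt hn, this]

open Finset Classical in
noncomputable def cliquesIn {V : Type} (G : SimpleGraph V) (U : Finset V) (r : ℕ) :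
    Finset (Finset V) := (U.powersetCard r).filter (fun e => G.IsClique (e : Set V))

open Finset Classical in
lemma exists_ext_clique {V : Type} [Fintype V] (q : ℕ) (U : Finset V) (hU : q ≤ U.card)
    (G : SimpleGraph V) (hG : ∀ e ⊆ U, e.card = q + 1 → ¬ G.IsClique (e : Set V)) :
    ∃ G' : SimpleGraph V, G ≤ G' ∧ (∀ e ⊆ U, e.card = q + 1 → ¬ G'.IsClique (e : Set V)) ∧
      ∃ A ⊆ U, A.card = q ∧ G'.IsClique (A : Set V) := by
  obtain ⟨M, hGM, hM⟩ := (Set.toFinite {G' : SimpleGraph V |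
    ∀ e ⊆ U, e.card = q + 1 → ¬ G'.IsClique (e : Set V)}).exists_le_maximal hG
  refine ⟨M, hGM, hM.1, ?_⟩
  by_contra hno
  push Not at hno
  obtain ⟨A, hAU, hA⟩ := exists_subset_card_eq hU
  have hA' := hno A hAU hA
  simp only [SimpleGraph.IsClique, Set.Pairwise] at hA'
  push Not at hA'
  obtain ⟨x, hx, y, hy, hxy, hadj⟩ := hA'
  have h1 : (M ⊔ SimpleGraph.edge x y) ∈ {G' : SimpleGraph V |
    ∀ e ⊆ U, e.card = q + 1 → ¬ G'.IsClique (e : Set V)} := by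
    intro e he hc hcl
    have h2 := hcl.sdiff_of_sup_edge
    have h4 : q ≤ (e.erase x).card := by
      have := pred_card_le_card_erase (s := e) (a := x)
      omega
    obtain ⟨B, hB, hBc⟩ := exists_subset_card_eq h4
    refine hno B (hB.trans ((erase_subset _ _).trans he)) hBc (h2.subset ?_)
    intro z hz
    have := hB hz
    simp at this ⊢
    tauto
  have h3 := hM.2 h1 le_sup_left
  apply hadj
  apply h3
  simp [SimpleGraph.sup_adj, SimpleGraph.edge_adj, hxy]

open Finset Classical in
lemma cliques_step {V : Type} (q r : ℕ) (U A : Finset V) (G : SimpleGraph V)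
    (hG : ∀ e ⊆ U, e.card = q + 1 → ¬ G.IsClique (e : Set V))
    (hAU : A ⊆ U) (hAG : G.IsClique (A : Set V)) :
    (cliquesIn G U r).card ≤
      ∑ s ∈ range (r + 1), (cliquesIn G (U \ A) s).card * (q - s).choose (r - s) := by
  have hmap : ((cliquesIn G U r : Finset (Finset V)) : Set (Finset V)).MapsTo (fun e => e \ A)
      ((range (r + 1)).biUnion (fun s => cliquesIn G (U \ A) s)) := by
    intro e he
    simp only [cliquesIn, mem_coe, mem_filter, mem_powersetCard, mem_biUnion, mem_range] at he ⊢
    refine ⟨(e \ A).card, ?_, ⟨sdiff_subset_sdiff he.1.1 (Subset.refl _), rfl⟩, he.2.subset ?_⟩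
    · have := card_le_card (sdiff_subset (s := e) (t := A)); omega
    · intro z hz; simp at hz ⊢; exact hz.1
  rw [card_eq_sum_card_fiberwise hmap, sum_biUnion]
  swap
  · intro s _ t _ hst
    rw [Function.onFun, disjoint_left]
    intro e he he'
    simp only [cliquesIn, mem_filter, mem_powersetCard] at he he'
    omega
  apply sum_le_sum
  intro s hs
  rw [← smul_eq_mul, ← sum_const]
  apply sum_le_sum
  intro B hB
  simp only [cliquesIn, mem_filter, mem_powersetCard] at hB
  obtain ⟨⟨hBU, hBs⟩, hBG⟩ := hB
  have hBA : ∀ x ∈ B, x ∈ U ∧ x ∉ A := fun x hx => by simpa using hBU hx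
  set N := A.filter (fun a => ∀ b ∈ B, G.Adj b a) with hN
  have hd : Disjoint B N := by
    rw [disjoint_left]; intro x hx hx'
    exact (hBA x hx).2 (mem_filter.1 hx').1
  have hcl : G.IsClique ((B ∪ N : Finset V) : Set V) := by
    intro x hx y hy hxy
    simp only [coe_union, Set.mem_union, mem_coe] at hx hy
    rcases hx with hx | hx <;> rcases hy with hy | hy
    · exact hBG hx hy hxy
    · exact (mem_filter.1 hy).2 x hx
    · exact ((mem_filter.1 hx).2 y hy).symm
    · exact hAG (mem_filter.1 hx).1 (mem_filter.1 hy).1 hxy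
  have hcard : N.card ≤ q - s := by
    by_contra hlt
    have h1 : q + 1 ≤ (B ∪ N).card := by
      rw [card_union_of_disjoint hd]; omega
    obtain ⟨C, hC, hCc⟩ := exists_subset_card_eq h1
    refine hG C (hC.trans (union_subset (fun x hx => (hBA x hx).1)
      ((filter_subset _ _).trans hAU))) hCc (hcl.subset (by exact_mod_cast hC))
  refine le_trans ?_ (Nat.choose_le_choose (r - s) hcard)
  rw [← card_powersetCard]
  apply card_le_card_of_injOn (fun e => e ∩ A)
  · intro e he
    simp only [cliquesIn, coe_filter, mem_filter, mem_powersetCard, Set.mem_ofPred_eq] at he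
    obtain ⟨⟨⟨heU, her⟩, heG⟩, heB⟩ := he
    simp only [mem_coe, mem_powersetCard]
    constructor
    · intro x hx
      rw [mem_inter] at hx
      rw [hN, mem_filter]
      refine ⟨hx.2, fun b hb => ?_⟩
      have hb' := hb
      rw [← heB, mem_sdiff] at hb'
      exact heG hb'.1 hx.1 (fun h => hb'.2 (h ▸ hx.2))
    · have := card_sdiff_add_card_inter e A
      rw [heB] at this
      omega
  · intro e he e' he' heq
    simp only [coe_filter, Set.mem_ofPred_eq] at he he'
    rw [← sdiff_union_inter e A, ← sdiff_union_inter e' A, he.2, he'.2]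
    simp only at heq
    rw [heq]

open Finset Classical in
/-- Zykov: the number of `r`-cliques in a `K_{q+1}`-free graph. -/
lemma zykov_s16 {V : Type} [Fintype V] (q : ℕ) (hq : 0 < q) (n : ℕ) :
    ∀ (U : Finset V) (G : SimpleGraph V) (r : ℕ), U.card = n →
      (∀ e ⊆ U, e.card = q + 1 → ¬ G.IsClique (e : Set V)) →
      (cliquesIn G U r).card ≤ turanNum n q r := by
  induction n using Nat.strong_induction_on with
  | _ n ih =>
    intro U G r hU hG
    rcases lt_or_ge n q with hlt | hge
    · refine le_trans ?_ (turanNum_small n q r hlt)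
      rw [← hU, ← card_powersetCard]
      exact card_le_card (filter_subset _ _)
    · obtain ⟨G', hGG', hG', A, hAU, hAq, hAG⟩ := exists_ext_clique q U (hU ▸ hge) G hG
      have h1 : (cliquesIn G U r).card ≤ (cliquesIn G' U r).card := by
        apply card_le_card
        intro e he
        simp only [cliquesIn, mem_filter] at he ⊢
        exact ⟨he.1, he.2.mono hGG'⟩
      refine h1.trans ((cliques_step q r U A G' hG' hAU hAG).trans
        (le_trans ?_ (turanNum_step n q r hq hge)))
      apply sum_le_sum
      intro s _
      apply Nat.mul_le_mul_right
      apply ih (n - q) (by omega)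
      · rw [card_sdiff_of_subset hAU]; omega
      · intro e he; exact hG' e (he.trans sdiff_subset)

/-- Colour of a vertex. -/
def vcol (n q : ℕ) (hq : 0 < q) (v : Fin n) : Fin q := ⟨(v : ℕ) % q, Nat.mod_lt _ hq⟩

open Finset in
lemma card_vcol (n q : ℕ) (hq : 0 < q) (i : Fin q) :
    ((univ : Finset (Fin n)).filter (fun v => vcol n q hq v = i)).card = balancedPart n q i := by
  have h := Nat.count_modEq_card n hq (i : ℕ)
  rw [Nat.mod_eq_of_lt i.2] at h
  rw [balancedPart, ← h, Nat.count_eq_card_filter_range]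
  apply card_bij (fun (v : Fin n) _ => (v : ℕ))
  · intro v hv
    simp only [mem_filter, mem_univ, true_and, vcol, Fin.ext_iff] at hv
    simp [Nat.ModEq, hv, Nat.mod_eq_of_lt i.2]
  · intro v _ w _ h; exact Fin.ext h
  · intro b hb
    simp only [mem_filter, mem_range, Nat.ModEq, Nat.mod_eq_of_lt i.2] at hb
    exact ⟨⟨b, hb.1⟩, by simp [vcol, Fin.ext_iff, hb.2], rfl⟩

open Finset in
/-- The complete balanced multipartite `r`-graph. -/
def multiG (n q r : ℕ) (hq : 0 < q) : Finset (Finset (Fin n)) :=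
  (univ.powersetCard r).filter (fun e => ∀ x ∈ e, ∀ y ∈ e, vcol n q hq x = vcol n q hq y → x = y)

open Finset in
lemma turanNum_le_multiG (n q r : ℕ) (hq : 0 < q) :
    turanNum n q r ≤ (multiG n q r hq).card := by
  classical
  have h : turanNum n q r = (((univ : Finset (Fin q)).powersetCard r).sigma (fun S =>
      S.pi (fun i => (univ : Finset (Fin n)).filter (fun v => vcol n q hq v = i)))).card := by
    rw [card_sigma]
    simp_rw [card_pi, card_vcol]
    rfl
  rw [h]
  have key : ∀ S : Finset (Fin q), ∀ p ∈ S.pi (fun i => (univ : Finset (Fin n)).filter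
      (fun v => vcol n q hq v = i)), ∀ i (hi : i ∈ S), vcol n q hq (p i hi) = i := by
    intro S p hp i hi
    have := mem_pi.1 hp i hi
    simpa using this
  have himg : ∀ S : Finset (Fin q), ∀ p ∈ S.pi (fun i => (univ : Finset (Fin n)).filter
      (fun v => vcol n q hq v = i)),
      (S.attach.image (fun i => p i.1 i.2)).image (vcol n q hq) = S := by
    intro S p hp
    ext i
    simp only [mem_image, mem_attach, true_and, Subtype.exists]
    constructor
    · rintro ⟨v, ⟨j, hj, rfl⟩, rfl⟩
      rw [key S p hp]; exact hj
    · intro hi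
      exact ⟨_, ⟨i, hi, rfl⟩, key S p hp i hi⟩
  apply card_le_card_of_injOn (fun x => x.1.attach.image (fun i => x.2 i.1 i.2))
  · rintro ⟨S, p⟩ hx
    simp only [mem_coe, mem_sigma, mem_powersetCard] at hx
    obtain ⟨⟨_, hS⟩, hp⟩ := hx
    simp only [multiG, mem_coe, mem_filter, mem_powersetCard]
    refine ⟨⟨subset_univ _, ?_⟩, ?_⟩
    · rw [card_image_of_injective, card_attach, hS]
      rintro ⟨i, hi⟩ ⟨j, hj⟩ hij
      have := congrArg (vcol n q hq) hij
      simp only at this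
      rw [key S p hp, key S p hp] at this
      exact Subtype.ext this
    · intro x hx y hy hxy
      simp only [mem_image, mem_attach, true_and, Subtype.exists] at hx hy
      obtain ⟨i, hi, rfl⟩ := hx
      obtain ⟨j, hj, rfl⟩ := hy
      rw [key S p hp, key S p hp] at hxy
      subst hxy
      rfl
  · rintro ⟨S, p⟩ hx ⟨S', p'⟩ hx' heq
    simp only [mem_coe, mem_sigma] at hx hx'
    have hp := hx.2
    have hp' := hx'.2
    simp only at heq hp hp'
    have hS : S = S' := by
      rw [← himg S p hp, ← himg S' p' hp', heq]
    subst hS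
    congr 1
    funext i hi
    have h1 : p i hi ∈ S.attach.image (fun i => p' i.1 i.2) := by
      rw [← heq]
      exact mem_image.2 ⟨⟨i, hi⟩, mem_attach _ _, rfl⟩
    simp only [mem_image, mem_attach, true_and, Subtype.exists] at h1
    obtain ⟨j, hj, hji⟩ := h1
    have := congrArg (vcol n q hq) hji
    rw [key S p hp, key S p' hp'] at this
    subst this
    exact hji.symm

/-- The shadow graph. -/
def shadowG {n : ℕ} (G : Finset (Finset (Fin n))) : SimpleGraph (Fin n) where
  Adj x y := x ≠ y ∧ ∃ e ∈ G, x ∈ e ∧ y ∈ e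
  symm := ⟨fun _ _ h => ⟨h.1.symm, h.2.imp fun _ he => ⟨he.1, he.2.2, he.2.1⟩⟩⟩
  loopless := ⟨fun _ h => h.1 rfl⟩

open Finset in
lemma shadow_free {n ℓ r : ℕ} (hn : 0 < n) (G : Finset (Finset (Fin n)))
    (hG : G ⊆ Finset.univ.powersetCard r)
    (hfree : ¬∃ H₀ : Finset (Finset ℕ), ∃ H : Finset (Finset (Fin n)),
          MubayiMember ℓ r H₀ ∧ IsHypCopy H₀ H ∧ H ⊆ G) (S : Finset (Fin n)) (hS : S.card = ℓ) :
    ¬ (shadowG G).IsClique (S : Set (Fin n)) := by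
  classical
  intro hcl
  apply hfree
  -- choose an edge for every pair of core vertices
  have hch : ∀ P : Finset (Fin n), ∃ e : Finset (Fin n), P ∈ S.powersetCard 2 → e ∈ G ∧ P ⊆ e := by
    intro P
    by_cases hP : P ∈ S.powersetCard 2
    · rw [mem_powersetCard, card_eq_two] at hP
      obtain ⟨hPS, x, y, hxy, rfl⟩ := hP
      obtain ⟨_, e, he, hx, hy⟩ := hcl (hPS (by simp)) (hPS (by simp)) hxy
      refine ⟨e, fun _ => ⟨he, ?_⟩⟩
      intro z hz
      simp at hz
      rcases hz with rfl | rfl <;> assumption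
    · exact ⟨∅, fun h => absurd h hP⟩
  choose E hE using hch
  set H := (S.powersetCard 2).image E with hH
  have hHG : H ⊆ G := by
    intro e he
    obtain ⟨P, hP, rfl⟩ := mem_image.1 he
    exact (hE P hP).1
  have hinv : ∀ v : Fin n, (fun k : ℕ => if h : k < n then (⟨k, h⟩ : Fin n) else ⟨0, hn⟩) (v : ℕ) = v := by
    intro v; simp
  refine ⟨H.image (Finset.image Fin.val), H, ⟨?_, ?_, S.image Fin.val, ?_, ?_⟩, ⟨fun k => if h : k < n then ⟨k, h⟩ else ⟨0, hn⟩, ?_, ?_⟩, hHG⟩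
  · intro e he
    obtain ⟨e', he', rfl⟩ := mem_image.1 he
    rw [card_image_of_injective _ Fin.val_injective]
    exact (mem_powersetCard.1 (hG (hHG he'))).2
  · refine card_image_le.trans (card_image_le.trans ?_)
    rw [card_powersetCard, hS]
  · rw [card_image_of_injective _ Fin.val_injective, hS]
  · intro a ha b hb hab
    obtain ⟨x, hx, rfl⟩ := mem_image.1 ha
    obtain ⟨y, hy, rfl⟩ := mem_image.1 hb
    have hxy : x ≠ y := fun h => hab (h ▸ rfl)
    have hP : ({x, y} : Finset (Fin n)) ∈ S.powersetCard 2 := by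
      rw [mem_powersetCard]
      refine ⟨?_, card_pair hxy⟩
      intro z hz
      simp at hz
      rcases hz with rfl | rfl <;> assumption
    have h2 := (hE _ hP).2
    exact ⟨_, mem_image_of_mem _ (mem_image_of_mem _ hP),
      mem_image_of_mem _ (h2 (by simp)), mem_image_of_mem _ (h2 (by simp))⟩
  · have hlt : ∀ k ∈ (H.image (Finset.image Fin.val)).sup id, k < n := by
      intro k hk
      rw [mem_sup] at hk
      obtain ⟨e, he, hke⟩ := hk
      obtain ⟨e', _, rfl⟩ := mem_image.1 he
      obtain ⟨v, _, rfl⟩ := mem_image.1 hke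
      exact v.2
    intro a ha b hb hab
    have h1 := hlt a ha
    have h2 := hlt b hb
    simpa [h1, h2] using hab
  · rw [image_image]
    conv_lhs => rw [← image_id (s := H)]
    apply image_congr
    intro e _
    simp only [Function.comp, id, image_image]
    conv_lhs => rw [← image_id (s := e)]
    apply image_congr
    intro v _
    simp

open Finset in
lemma multiG_free (n ℓ r q : ℕ) (hq : 0 < q) (hqℓ : q < ℓ) :
    ¬∃ H₀ : Finset (Finset ℕ), ∃ H : Finset (Finset (Fin n)),
          MubayiMember ℓ r H₀ ∧ IsHypCopy H₀ H ∧ H ⊆ multiG n q r hq := by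
  rintro ⟨H₀, H, ⟨_, _, S, hS, hcov⟩, ⟨f, hf, rfl⟩, hsub⟩
  obtain ⟨a, ha, b, hb, hab, hcol⟩ := exists_ne_map_eq_of_card_lt_of_maps_to
    (s := S) (t := (univ : Finset (Fin q))) (by simp [hS, hqℓ])
    (f := fun a => vcol n q hq (f a)) (fun _ _ => by simp)
  obtain ⟨e, he, hae, hbe⟩ := hcov a ha b hb hab
  have h1 := (mem_filter.1 (hsub (mem_image_of_mem _ he))).2 _ (mem_image_of_mem f hae) _
    (mem_image_of_mem f hbe) hcol
  refine hab (hf ?_ ?_ h1)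
  · exact mem_sup.2 ⟨e, he, hae⟩
  · exact mem_sup.2 ⟨e, he, hbe⟩

open Finset in
lemma upper_bound (n ℓ r : ℕ) (hn : 2 ≤ n) (hℓ : 2 ≤ ℓ) (G : Finset (Finset (Fin n)))
    (hG : G ⊆ Finset.univ.powersetCard r)
    (hfree : ¬∃ H₀ : Finset (Finset ℕ), ∃ H : Finset (Finset (Fin n)),
          MubayiMember ℓ r H₀ ∧ IsHypCopy H₀ H ∧ H ⊆ G) :
    G.card ≤ turanNum n (ℓ - 1) r := by
  have h := zykov_s16 (ℓ - 1) (by omega) n (univ : Finset (Fin n)) (shadowG G) r (by simp)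
    (fun e _ he => shadow_free (by omega) G hG hfree e (by omega))
  refine le_trans (card_le_card ?_) h
  intro e he
  simp only [cliquesIn, mem_filter]
  exact ⟨hG he, fun x hx y hy hxy => ⟨hxy, e, he, hx, hy⟩⟩

/-- Mubayi's hypergraph Turán theorem, `ex(n, K_ℓ^{(r)}) = t_r(n,ℓ-1)`:
the maximum number of edges of a `K_ℓ^{(r)}`-free `r`-graph on `[n]` equals the
number of edges of the complete balanced `(ℓ-1)`-partite `r`-graph. -/
theorem mubayi_turan (n ℓ r : ℕ) (hn : 2 ≤ n) (hℓ : 2 ≤ ℓ) (hr : 2 ≤ r) :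
    IsGreatest
      {m | ∃ G : Finset (Finset (Fin n)),
        G ⊆ Finset.univ.powersetCard r ∧
        (¬∃ H₀ : Finset (Finset ℕ), ∃ H : Finset (Finset (Fin n)),
          MubayiMember ℓ r H₀ ∧ IsHypCopy H₀ H ∧ H ⊆ G) ∧
        m = G.card}
      (turanNum n (ℓ - 1) r) := by
  constructor
  · have hq : 0 < ℓ - 1 := by omega
    have hsub : multiG n (ℓ - 1) r hq ⊆ Finset.univ.powersetCard r := Finset.filter_subset _ _
    have hfree := multiG_free n ℓ r (ℓ - 1) hq (by omega)
    exact ⟨multiG n (ℓ - 1) r hq, hsub, hfree,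
      le_antisymm (turanNum_le_multiG n (ℓ - 1) r hq) (upper_bound n ℓ r hn hℓ _ hsub hfree)⟩
  · rintro m ⟨G, hG, hfree, rfl⟩
    exact upper_bound n ℓ r hn hℓ G hG hfree
end

section
/- Let ℓ ≥ 4 and n ≥ ℓ, set q = ℓ−1, and let m_1,…,m_{ℓ−2} be the balanced part sizes of a partition of n into ℓ−2 parts. Then ∑_{s=1}^{ℓ−2} C(m_s, 2) < 3·(C(n,3) − t_3(n, ℓ−1)). In other words, the degree of the Vandermonde-type product over a balanced (ℓ−2)-partition of [n] is strictly smaller than the minimum degree 3(C(n,3) − t_3(n,ℓ−1)) of the homogeneous generators p_G of P̂(3)(n,ℓ). -/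
lemma bp_sum (n q : ℕ) (hq : 0 < q) (f : ℕ → ℤ) :
    ∑ i : Fin q, f (balancedPart n q i) =
      ((n % q : ℕ) : ℤ) * f (n / q + 1) + ((q : ℤ) - ((n % q : ℕ) : ℤ)) * f (n / q) := by
  have hlt := Nat.mod_lt n hq
  unfold balancedPart
  rw [Fin.sum_univ_eq_sum_range (fun i => f (n / q + if i < n % q then 1 else 0)) q]
  obtain ⟨k, hk⟩ := Nat.exists_eq_add_of_le hlt.le
  generalize n % q = s at *
  generalize n / q = c at *
  subst hk
  rw [Finset.sum_range_add]
  have h1 : ∑ x ∈ Finset.range s, f (c + if x < s then 1 else 0)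
      = ∑ x ∈ Finset.range s, f (c + 1) := by
    apply Finset.sum_congr rfl
    intro x hx
    rw [if_pos (Finset.mem_range.1 hx)]
  have h2 : ∑ x ∈ Finset.range k, f (c + if s + x < s then 1 else 0)
      = ∑ x ∈ Finset.range k, f c := by
    apply Finset.sum_congr rfl
    intro x hx
    rw [if_neg (by omega), add_zero]
  rw [h1, h2]
  simp

lemma esymm_insert {α : Type*} [DecidableEq α] (f : α → ℤ) (s : Finset α) (a : α) (ha : a ∉ s)
    (k : ℕ) :
    ∑ S ∈ (insert a s).powersetCard (k + 1), ∏ i ∈ S, f i =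
      ∑ S ∈ s.powersetCard (k + 1), ∏ i ∈ S, f i
        + f a * ∑ S ∈ s.powersetCard k, ∏ i ∈ S, f i := by
  have hm : ∀ S ∈ s.powersetCard k, a ∉ S := fun S hS h =>
    ha ((Finset.mem_powersetCard.1 hS).1 h)
  rw [Finset.powersetCard_succ_insert ha, Finset.sum_union, Finset.sum_image, Finset.mul_sum]
  · congr 1
    apply Finset.sum_congr rfl
    intro S hS
    rw [Finset.prod_insert (hm S hS)]
  · intro S hS T hT h
    have h' := congrArg (fun U => Finset.erase U a) h
    simpa [Finset.erase_insert (hm S hS), Finset.erase_insert (hm T hT)] using h'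
  · rw [Finset.disjoint_left]
    intro S hS hS'
    obtain ⟨T, hT, rfl⟩ := Finset.mem_image.1 hS'
    exact ha ((Finset.mem_powersetCard.1 hS).1 (Finset.mem_insert_self a T))

lemma newton_three {α : Type*} [DecidableEq α] (f : α → ℤ) (s : Finset α) :
    (∑ S ∈ s.powersetCard 1, ∏ i ∈ S, f i = ∑ i ∈ s, f i) ∧
    (2 * ∑ S ∈ s.powersetCard 2, ∏ i ∈ S, f i = (∑ i ∈ s, f i) ^ 2 - ∑ i ∈ s, f i ^ 2) ∧
    (6 * ∑ S ∈ s.powersetCard 3, ∏ i ∈ S, f i = (∑ i ∈ s, f i) ^ 3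
      - 3 * (∑ i ∈ s, f i) * (∑ i ∈ s, f i ^ 2) + 2 * ∑ i ∈ s, f i ^ 3) := by
  induction s using Finset.induction_on with
  | empty =>
    have h : ∀ k, Finset.powersetCard (k + 1) (∅ : Finset α) = ∅ := fun k =>
      Finset.powersetCard_eq_empty.2 (by simp)
    refine ⟨?_, ?_, ?_⟩
    · rw [h 0]; simp
    · rw [h 1]; simp
    · rw [h 2]; simp
  | insert a s ha ih =>
    obtain ⟨h1, h2, h3⟩ := ih
    have e1 := esymm_insert f s a ha 0
    have e2 := esymm_insert f s a ha 1
    have e3 := esymm_insert f s a ha 2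
    simp only [Finset.powersetCard_zero, Finset.sum_singleton, Finset.prod_empty, zero_add,
      Nat.reduceAdd] at e1 e2 e3
    rw [e1, e2, e3]
    simp only [Finset.sum_insert ha]
    refine ⟨by rw [h1]; ring, ?_, ?_⟩
    · rw [h1]; linear_combination h2
    · linear_combination h3 + 3 * f a * h2

lemma two_choose (m : ℕ) : 2 * (m.choose 2 : ℤ) = m * (m - 1) := by
  induction m with
  | zero => simp
  | succ k ih =>
    rw [Nat.choose_succ_succ' k 1]; push_cast; rw [Nat.choose_one_right]; linear_combination ih

lemma six_choose (m : ℕ) : 6 * (m.choose 3 : ℤ) = m * (m - 1) * (m - 2) := by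
  induction m with
  | zero => simp
  | succ k ih =>
    rw [Nat.choose_succ_succ' k 2]; push_cast; linear_combination ih + 3 * two_choose k

/-- The purely arithmetic inequality. -/
lemma arith_core (n q c s b r : ℤ) (hq : 3 ≤ q) (hn : q + 1 ≤ n)
    (h1 : n = q * c + s) (hs : 0 ≤ s) (hsq : s < q) (hc : 1 ≤ c)
    (h2 : n = (q - 1) * b + r) (hr : 0 ≤ r) (hrq : r < q - 1) (hb : 1 ≤ b) :
    r * ((b + 1) * b) + (q - 1 - r) * (b * (b - 1)) <
      s * ((c + 1) * c * (3 * n - 2 * (c + 1) - 2)) + (q - s) * (c * (c - 1) * (3 * n - 2 * c - 2)) := by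
  have hL : r * ((b + 1) * b) + (q - 1 - r) * (b * (b - 1)) = b * (n + r - (q - 1)) := by
    rw [h2]; ring
  have hnc : c + 2 ≤ n := by nlinarith
  have hR : c * (n + s - q) * n ≤
      s * ((c + 1) * c * (3 * n - 2 * (c + 1) - 2))
        + (q - s) * (c * (c - 1) * (3 * n - 2 * c - 2)) := by
    have e : c * (n + s - q) * n = s * ((c + 1) * c * n) + (q - s) * (c * (c - 1) * n) := by
      have : n + s - q = s * (c + 1) - s * (c - 1) + q * (c - 1) := by rw [h1]; ring
      rw [this]; ring
    rw [e]
    have hcc : 0 ≤ c * (c - 1) := mul_nonneg (by omega) (by omega)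
    have hcc' : 0 ≤ (c + 1) * c := mul_nonneg (by omega) (by omega)
    have i1 := mul_le_mul_of_nonneg_left (show n ≤ 3 * n - 2 * (c + 1) - 2 by omega) hcc'
    have i2 := mul_le_mul_of_nonneg_left (show n ≤ 3 * n - 2 * c - 2 by omega) hcc
    exact add_le_add (mul_le_mul_of_nonneg_left i1 hs)
      (mul_le_mul_of_nonneg_left i2 (by omega))
  rw [hL]
  refine lt_of_lt_of_le ?_ hR
  have hbc : b ≤ 2 * c := by
    by_contra h
    have : 2 * c + 1 ≤ b := by omega
    nlinarith
  rcases lt_or_ge n (2 * q) with h | h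
  · have hc1 : c = 1 := by
      by_contra hne
      have : 2 ≤ c := by omega
      nlinarith
    subst hc1
    have hs1 : s = n - q := by linarith
    have hb2 : b = 1 ∨ b = 2 := by omega
    have : 4 * s ≤ s * n := by nlinarith
    rcases hb2 with rfl | rfl
    · nlinarith
    · have : r ≤ 1 := by omega
      nlinarith
  · have a1 : b * (n + r - (q - 1)) ≤ 2 * c * (n - 1) :=
      mul_le_mul hbc (by omega) (by omega) (by omega)
    have a2 : n ≤ 2 * (n + s - q) := by omega
    have a3 : 2 * (n - 1) < (n + s - q) * n := by nlinarith
    nlinarith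

/-- for `ℓ ≥ 4` and `n ≥ ℓ`, if `m_1, …, m_{ℓ-2}` are the balanced
part sizes of a partition of `n` into `ℓ-2` parts, then
`∑_s C(m_s,2) < 3·(C(n,3) - t_3(n,ℓ-1))`: the degree of the Vandermonde-type
product over a balanced `(ℓ-2)`-partition is strictly smaller than the minimum
degree of the homogeneous generators `p_G` of `P̂(3)(n,ℓ)`. -/
theorem vandermonde_degree_lt_generator_degree (n ℓ : ℕ) (hℓ : 4 ≤ ℓ) (hn : ℓ ≤ n) :
    (∑ s : Fin (ℓ - 2), (Nat.choose (balancedPart n (ℓ - 2) s) 2 : ℤ)) <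
      3 * ((Nat.choose n 3 : ℤ) - (turanNum n (ℓ - 1) 3 : ℤ)) := by
  obtain ⟨p, rfl⟩ : ∃ p, ℓ = p + 2 := ⟨ℓ - 2, by omega⟩
  have e1 : p + 2 - 2 = p := by omega
  have e2 : p + 2 - 1 = p + 1 := by omega
  rw [e1, e2]
  have hL := bp_sum n p (by omega) (fun m => (m.choose 2 : ℤ))
  have hp1 := bp_sum n (p + 1) (by omega) (fun m => (m : ℤ))
  have hp2 := bp_sum n (p + 1) (by omega) (fun m => (m : ℤ) ^ 2)
  have hp3 := bp_sum n (p + 1) (by omega) (fun m => (m : ℤ) ^ 3)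
  have hN := (newton_three (fun i => (balancedPart n (p + 1) i : ℤ)) Finset.univ).2.2
  have ht : (turanNum n (p + 1) 3 : ℤ) = ∑ S ∈ (Finset.univ : Finset (Fin (p + 1))).powersetCard 3,
      ∏ i ∈ S, (balancedPart n (p + 1) i : ℤ) := by
    unfold turanNum; push_cast; rfl
  rw [← ht] at hN
  have d1 : (n : ℤ) = ((p + 1 : ℕ) : ℤ) * (n / (p + 1) : ℕ) + (n % (p + 1) : ℕ) := by
    exact_mod_cast (Nat.div_add_mod n (p + 1)).symm
  have d2 : (n : ℤ) = (p : ℤ) * (n / p : ℕ) + (n % p : ℕ) := by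
    exact_mod_cast (Nat.div_add_mod n p).symm
  have l1 := Nat.mod_lt n (show p + 1 > 0 by omega)
  have l2 := Nat.mod_lt n (show p > 0 by omega)
  have c1 : 1 ≤ n / (p + 1) := (Nat.one_le_div_iff (by omega)).2 (by omega)
  have c2 : 1 ≤ n / p := (Nat.one_le_div_iff (by omega)).2 (by omega)
  have h6 := six_choose n
  rw [hL]
  rw [hp1, hp2, hp3] at hN
  have k1 := two_choose (n / p + 1)
  have k2 := two_choose (n / p)
  generalize n / p = b at *
  generalize n % p = r at *
  generalize n / (p + 1) = c at *
  generalize n % (p + 1) = s at *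
  have key := arith_core n (p + 1) c s b r (by omega) (by omega) (by push_cast at d1; exact d1)
    (by omega) (by omega) (by omega) (by rw [d2]; ring) (by omega) (by omega) (by omega)
  push_cast at hN k1 d1 ⊢
  have hp : (s : ℤ) * (c + 1) + (p + 1 - s) * c = n := by rw [d1]; ring
  rw [hp] at hN
  have hR : 2 * (3 * ((n.choose 3 : ℤ) - turanNum n (p + 1) 3)) =
    s * ((c + 1) * c * (3 * n - 2 * (c + 1) - 2))
      + (p + 1 - s) * (c * (c - 1) * (3 * n - 2 * c - 2)) := by
    linear_combination h6 - hN + (-3 * (n : ℤ) + 2) * hp.symm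
  have hL2 : 2 * ((r : ℤ) * ((b + 1).choose 2 : ℤ) + (p - r) * (b.choose 2 : ℤ)) =
     r * ((b + 1) * b) + ((p + 1 : ℤ) - 1 - r) * (b * (b - 1)) := by
    linear_combination (r : ℤ) * k1 + ((p : ℤ) - r) * k2
  linarith
end
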